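/- arXiv:2211.01306 — 2 statements merged into one kernel-verified Lean document; each statement's English description precedes it below -/
import Mathlib

section
/- Let K ≥ 2, τ > 0, α ∈ ℝ^K with all α_i > 0, and β ∈ ℝ^K with all β_i > 0, and let X have the inverse Schlömilch distribution IS(α, β, τ). Then for all indices i, j, k, l, the log-ratio covariance satisfies Cov[log(X_i/X_k), log(X_j/X_l)] = (1/τ²)[(δ_{ij} − δ_{il}) ψ'(α_i) − (δ_{kj} − δ_{kl}) ψ'(α_k)], where ψ' is the trigamma function and δ is the Kronecker delta. -/
open MeasureTheory Finset

noncomputable def fillMap (K : ℕ) (u : Fin (K - 1) → ℝ) : Fin K → ℝ :=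
  fun i => if h : (i : ℕ) < K - 1 then u ⟨i, h⟩ else 1 - ∑ j, u j

/-- The `(K-1)`-dimensional Lebesgue measure on the probability simplex `S_K`. -/
noncomputable def simplexMeasure (K : ℕ) : Measure (Fin K → ℝ) :=
  Measure.map (fillMap K)
    (volume.restrict {u : Fin (K - 1) → ℝ | (∀ j, 0 ≤ u j) ∧ ∑ j, u j ≤ 1})

/-- The density of the inverse Schlömilch distribution `IS(α, β, τ)` on the simplex. -/
noncomputable def isDensity (K : ℕ) (α β : Fin K → ℝ) (τ : ℝ) (x : Fin K → ℝ) : ℝ :=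
  τ ^ (K - 1) * Real.Gamma (∑ i, α i) * (∑ j, β j / x j ^ τ) ^ (-(∑ i, α i)) *
    ∏ i, β i ^ (α i) / (Real.Gamma (α i) * x i ^ (τ * α i + 1))

/-- The digamma function `ψ = Γ'/Γ`. -/
noncomputable def digamma (x : ℝ) : ℝ := deriv Real.Gamma x / Real.Gamma x

/-- The trigamma function `ψ'`, the derivative of the digamma function. -/
noncomputable def trigamma (x : ℝ) : ℝ := deriv digamma x

/-- Kronecker delta. -/
def kd {K : ℕ} (a b : Fin K) : ℝ := if a = b then 1 else 0

/-!
The measure `IS(α, β, τ)` is the law of the normalization `Z / ∑ i, Z i` of a vector of independent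
generalized gamma variables `Z i = G i ^ (-1 / τ)`, where `G i` is gamma distributed with shape
`α i` and rate `β i`. To see this, use the polar coordinates `z = s • x`, `x` on the simplex and
`s > 0`, in which `dz = s ^ n ds dx` for `K = n + 1`: the joint density of `Z` times `s ^ n` is the
density of `IS(α, β, τ)` at `x` times the density in `s` of another generalized gamma distribution,
with shape `∑ i, α i` and rate `∑ j, β j / x j ^ τ`, which integrates to `1`.

The normalization cancels in log-ratios, so these become `log (Z i) - log (Z k)`, and by
independence only the variances of the `log (Z i)` contribute to the covariance. Tilting a
generalized gamma distribution by `exp (t * log z)` only shifts its shape, so the cumulant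
generating function of `log (Z i)` is `t ↦ log Γ(α i - t / τ)` up to an affine function of `t`; its
second derivative at `0` is `ψ'(α i) / τ ^ 2`.
-/

open ProbabilityTheory
open scoped ENNReal

section ProductDensity

variable {ι : Type*} [Fintype ι] {X : ι → Type*} [∀ i, MeasurableSpace (X i)]
  {μ : ∀ i, Measure (X i)} [∀ i, SigmaFinite (μ i)] {f : ∀ i, X i → ℝ≥0∞}

lemma lintegral_pi_prod_eq_prod_lintegral (hf : ∀ i, Measurable (f i)) :
    ∫⁻ x, ∏ i, f i (x i) ∂Measure.pi μ = ∏ i, ∫⁻ x, f i x ∂μ i := by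
  classical
  by_cases hX : ∀ i, Nonempty (X i)
  · have marginal (s : Finset ι) (x : ∀ i, X i) :
        lmarginal μ s (fun x ↦ ∏ i ∈ s, f i (x i)) x = ∏ i ∈ s, ∫⁻ y, f i y ∂μ i := by
      induction s using Finset.induction_on generalizing x with
      | empty => simp
      | insert i s hi ih =>
        have split_factor (x : ∀ i, X i) (y : X i) :
            ∏ j ∈ insert i s, f j (Function.update x i y j) = (∏ j ∈ s, f j (x j)) * f i y := by
          rw [Finset.prod_insert hi, Function.update_self, mul_comm]
          exact congrArg (· * _) (Finset.prod_congr rfl fun j hj ↦ by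
            rw [Function.update_of_ne (ne_of_mem_of_not_mem hj hi)])
        rw [lmarginal_insert' _ (by fun_prop) hi]
        simp_rw [split_factor, lintegral_const_mul _ (hf i)]
        rw [Finset.prod_insert hi, ← ih x, mul_comm]
        exact lintegral_mul_const _ (by fun_prop)
    simpa using marginal Finset.univ (fun i ↦ (hX i).some)
  · obtain ⟨i, hi⟩ := not_forall.mp hX
    have := not_nonempty_iff.mp hi
    have : IsEmpty (∀ i, X i) := ⟨fun x ↦ hi ⟨x i⟩⟩
    rw [Finset.prod_eq_zero (Finset.mem_univ i)] <;> simp [Measure.eq_zero_of_isEmpty]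

lemma pi_withDensity [∀ i, SigmaFinite ((μ i).withDensity (f i))] (hf : ∀ i, Measurable (f i)) :
    Measure.pi (fun i ↦ (μ i).withDensity (f i)) =
      (Measure.pi μ).withDensity fun x ↦ ∏ i, f i (x i) := by
  refine Measure.pi_eq fun s hs ↦ ?_
  simp_rw [withDensity_apply _ (MeasurableSet.univ_pi hs), Measure.restrict_pi_pi,
    lintegral_pi_prod_eq_prod_lintegral hf, withDensity_apply _ (hs _)]

end ProductDensity

section Polar

variable {n : ℕ}

lemma lintegral_eq_lintegral_lintegral_snoc {F : (Fin (n + 1) → ℝ) → ℝ≥0∞} (hF : Measurable F) :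
    ∫⁻ z, F z = ∫⁻ v : Fin n → ℝ, ∫⁻ r : ℝ, F (Fin.snoc v r) := by
  have e := (volume_preserving_piFinSuccAbove (fun _ : Fin (n + 1) ↦ ℝ) (Fin.last n)).symm
  rw [← e.lintegral_comp hF, Measure.volume_eq_prod, lintegral_prod_symm' _ (by fun_prop)]
  simp [MeasurableEquiv.piFinSuccAbove_symm_apply, Fin.snocEquiv]

lemma lintegral_eq_ofReal_pow_mul_lintegral_smul {s : ℝ} (hs : 0 < s)
    {F : (Fin n → ℝ) → ℝ≥0∞} (hF : Measurable F) :
    ∫⁻ v, F v = ENNReal.ofReal (s ^ n) * ∫⁻ v, F (s • v) := by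
  rw [← lintegral_map hF (measurable_const_smul s), Measure.map_addHaar_smul _ hs.ne',
    lintegral_smul_measure, Module.finrank_fin_fun, abs_of_pos (by positivity), smul_eq_mul,
    ← mul_assoc, ← ENNReal.ofReal_mul (by positivity), mul_inv_cancel₀ (by positivity),
    ENNReal.ofReal_one, one_mul]

lemma fillMap_succ_eq_snoc (u : Fin n → ℝ) : fillMap (n + 1) u = Fin.snoc u (1 - ∑ j, u j) := by
  ext i
  refine Fin.lastCases ?_ (fun j ↦ ?_) i <;> simp [fillMap]

@[fun_prop]
lemma measurable_fillMap (K : ℕ) : Measurable (fillMap K) := by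
  refine measurable_pi_lambda _ fun i ↦ ?_
  unfold fillMap
  split_ifs <;> fun_prop

lemma snoc_smul_sub_sum (s : ℝ) (u : Fin n → ℝ) :
    (Fin.snoc (s • u) (s - ∑ j, (s • u) j) : Fin (n + 1) → ℝ) = s • fillMap (n + 1) u := by
  rw [fillMap_succ_eq_snoc]
  ext i
  refine Fin.lastCases ?_ (fun j ↦ ?_) i <;> simp [mul_sub, Finset.mul_sum]

lemma fillMap_nonneg_iff {u : Fin n → ℝ} :
    0 ≤ fillMap (n + 1) u ↔ (∀ j, 0 ≤ u j) ∧ ∑ j, u j ≤ 1 := by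
  simp [fillMap_succ_eq_snoc, Pi.le_def, Fin.forall_fin_succ']

lemma measurableSet_nonneg_sum_le_one :
    MeasurableSet {u : Fin n → ℝ | (∀ j, 0 ≤ u j) ∧ ∑ j, u j ≤ 1} := by
  measurability

lemma sum_snoc_sub_sum (s : ℝ) (v : Fin n → ℝ) :
    ∑ i, (Fin.snoc v (s - ∑ j, v j) : Fin (n + 1) → ℝ) i = s := by
  simp [Fin.sum_univ_castSucc]

@[fun_prop]
lemma measurable_snoc_sub_sum :
    Measurable fun p : (Fin n → ℝ) × ℝ ↦
      (Fin.snoc p.1 (p.2 - ∑ j, p.1 j) : Fin (n + 1) → ℝ) := by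
  refine measurable_pi_lambda _ fun i ↦ ?_
  refine Fin.lastCases ?_ (fun j ↦ ?_) i <;>
    simp only [Fin.snoc_last, Fin.snoc_castSucc] <;> fun_prop

lemma setLIntegral_pi_Ioi_eq_lintegral_slices {F : (Fin (n + 1) → ℝ) → ℝ≥0∞} (hF : Measurable F) :
    ∫⁻ z in Set.univ.pi fun _ ↦ Set.Ioi 0, F z =
      ∫⁻ s in Set.Ioi (0 : ℝ), ∫⁻ v : Fin n → ℝ,
        (Set.Ici 0).indicator F (Fin.snoc v (s - ∑ j, v j)) := by
  have hG : Measurable ((Set.Ici 0).indicator F) := hF.indicator measurableSet_Ici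
  have notMem_orthant {s : ℝ} (hs : s < 0) (v : Fin n → ℝ) :
      (Fin.snoc v (s - ∑ j, v j) : Fin (n + 1) → ℝ) ∉ Set.Ici 0 := fun h ↦
    hs.not_ge (sum_snoc_sub_sum s v ▸ Finset.sum_nonneg fun i _ ↦ h i)
  calc ∫⁻ z in Set.univ.pi fun _ ↦ Set.Ioi 0, F z
    _ = ∫⁻ z, (Set.Ici 0).indicator F z := by
      rw [lintegral_indicator measurableSet_Ici]
      exact setLIntegral_congr Measure.univ_pi_Ioi_ae_eq_Ici
    _ = ∫⁻ v : Fin n → ℝ, ∫⁻ r : ℝ, (Set.Ici 0).indicator F (Fin.snoc v r) :=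
      lintegral_eq_lintegral_lintegral_snoc hG
    _ = ∫⁻ v : Fin n → ℝ, ∫⁻ s : ℝ, (Set.Ici 0).indicator F (Fin.snoc v (s - ∑ j, v j)) :=
      lintegral_congr fun v ↦ (lintegral_sub_right_eq_self
        (fun r ↦ (Set.Ici 0).indicator F (Fin.snoc v r)) (∑ j, v j)).symm
    _ = ∫⁻ s : ℝ, ∫⁻ v : Fin n → ℝ, (Set.Ici 0).indicator F (Fin.snoc v (s - ∑ j, v j)) :=
      lintegral_lintegral_swap (hG.comp measurable_snoc_sub_sum).aemeasurable
    _ = _ := by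
      rw [setLIntegral_congr MeasureTheory.Ioi_ae_eq_Ici]
      refine (setLIntegral_eq_of_support_subset fun s hs ↦ ?_).symm
      contrapose! hs
      simp [Set.indicator_of_notMem (notMem_orthant (not_le.mp hs) _)]

theorem setLIntegral_pi_Ioi_eq_lintegral_simplexMeasure
    {F : (Fin (n + 1) → ℝ) → ℝ≥0∞} (hF : Measurable F) :
    ∫⁻ z in Set.univ.pi fun _ ↦ Set.Ioi 0, F z =
      ∫⁻ x, (∫⁻ s in Set.Ioi (0 : ℝ), ENNReal.ofReal (s ^ n) * F (s • x))
        ∂simplexMeasure (n + 1) := by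
  have hG : Measurable ((Set.Ici 0).indicator F) := hF.indicator measurableSet_Ici
  have rescale {s : ℝ} (hs : 0 < s) :
      ∫⁻ v : Fin n → ℝ, (Set.Ici 0).indicator F (Fin.snoc v (s - ∑ j, v j)) =
        ∫⁻ u in {u : Fin n → ℝ | (∀ j, 0 ≤ u j) ∧ ∑ j, u j ≤ 1},
          ENNReal.ofReal (s ^ n) * F (s • fillMap (n + 1) u) := by
    have mem_iff (u : Fin n → ℝ) : s • fillMap (n + 1) u ∈ Set.Ici 0 ↔
        u ∈ {u : Fin n → ℝ | (∀ j, 0 ≤ u j) ∧ ∑ j, u j ≤ 1} := by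
      rw [Set.mem_Ici, smul_nonneg_iff_nonneg_of_pos_left hs, fillMap_nonneg_iff, Set.mem_ofPred_eq]
    rw [lintegral_eq_ofReal_pow_mul_lintegral_smul hs (by fun_prop)]
    simp_rw [snoc_smul_sub_sum]
    rw [lintegral_const_mul _ (by fun_prop), ← lintegral_indicator measurableSet_nonneg_sum_le_one]
    simp_rw [Set.indicator, mem_iff]
  calc ∫⁻ z in Set.univ.pi fun _ ↦ Set.Ioi 0, F z
    _ = ∫⁻ s in Set.Ioi (0 : ℝ), ∫⁻ u in {u : Fin n → ℝ | (∀ j, 0 ≤ u j) ∧ ∑ j, u j ≤ 1},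
          ENNReal.ofReal (s ^ n) * F (s • fillMap (n + 1) u) := by
      rw [setLIntegral_pi_Ioi_eq_lintegral_slices hF]
      exact setLIntegral_congr_fun measurableSet_Ioi fun s hs ↦ rescale hs
    _ = ∫⁻ u in {u : Fin n → ℝ | (∀ j, 0 ≤ u j) ∧ ∑ j, u j ≤ 1}, ∫⁻ s in Set.Ioi (0 : ℝ),
          ENNReal.ofReal (s ^ n) * F (s • fillMap (n + 1) u) :=
      lintegral_lintegral_swap (by fun_prop)
    _ = _ := by
      rw [simplexMeasure, lintegral_map (by fun_prop) (measurable_fillMap _)]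
      rfl

lemma ae_simplexMeasure_sum_eq_one : ∀ᵐ x ∂simplexMeasure (n + 1), ∑ i, x i = 1 := by
  rw [simplexMeasure, ae_map_iff (by fun_prop) (measurableSet_eq_fun (by fun_prop) (by fun_prop))]
  exact .of_forall fun u ↦ fillMap_succ_eq_snoc u ▸ sum_snoc_sub_sum 1 u

lemma ae_simplexMeasure_pos : ∀ᵐ x ∂simplexMeasure (n + 1), ∀ i, 0 < x i := by
  let N : Set (Fin (n + 1) → ℝ) := (Set.univ.pi fun _ ↦ Set.Ioi 0)ᶜ
  have hN : MeasurableSet N := (MeasurableSet.univ_pi fun _ ↦ measurableSet_Ioi).compl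
  have smul_mem {s : ℝ} (hs : 0 < s) {x : Fin (n + 1) → ℝ} (hx : x ∈ N) : s • x ∈ N := by
    simpa [N, hs] using hx
  have hF : Measurable (N.indicator (1 : (Fin (n + 1) → ℝ) → ℝ≥0∞)) :=
    measurable_one.indicator hN
  have cone_null : ∫⁻ z in Set.univ.pi fun _ ↦ Set.Ioi 0, N.indicator 1 z = 0 := by
    rw [setLIntegral_indicator hN, Set.compl_inter_self, Measure.restrict_empty,
      lintegral_zero_measure]
  rw [setLIntegral_pi_Ioi_eq_lintegral_simplexMeasure hF,
    lintegral_eq_zero_iff (by fun_prop)] at cone_null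
  filter_upwards [cone_null] with x hx
  by_contra! h_not_pos
  have hxN : x ∈ N := by simpa [N] using h_not_pos
  have support_eq : (Function.support fun s : ℝ ↦
      ENNReal.ofReal (s ^ n) * N.indicator 1 (s • x)) ∩ Set.Ioi 0 = Set.Ioi 0 := by
    refine Set.inter_eq_right.mpr fun s (hs : 0 < s) ↦ ?_
    simp [smul_mem hs hxN, hs]
  refine ((setLIntegral_pos_iff (by fun_prop)).mpr ?_).ne' hx
  rw [support_eq]
  simp

end Polar

section GenGamma

variable {p a b t x : ℝ}

/-- The density on `(0, ∞)` of Stacy's generalized gamma distribution: the law of `G ^ (1 / p)`,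
where `G` is gamma distributed with shape `a` and rate `b`. Negative `p` are allowed, and the
formula is only meaningful for `x > 0`. -/
noncomputable def genGammaPDFReal (p a b x : ℝ) : ℝ :=
  |p| * b ^ a / Real.Gamma a * x ^ (p * a - 1) * Real.exp (-(b * x ^ p))

/-- The generalized gamma distribution with density `genGammaPDFReal p a b` on `(0, ∞)`. -/
noncomputable def genGammaMeasure (p a b : ℝ) : Measure ℝ :=
  (volume.restrict (Set.Ioi 0)).withDensity fun x ↦ ENNReal.ofReal (genGammaPDFReal p a b x)

instance sigmaFinite_genGammaMeasure (p a b : ℝ) : SigmaFinite (genGammaMeasure p a b) := by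
  unfold genGammaMeasure
  infer_instance

@[fun_prop]
lemma measurable_genGammaPDFReal (p a b : ℝ) : Measurable (genGammaPDFReal p a b) := by
  unfold genGammaPDFReal
  fun_prop

lemma genGammaPDFReal_nonneg (ha : 0 < a) (hb : 0 < b) (hx : 0 < x) :
    0 ≤ genGammaPDFReal p a b x := by
  have := Real.Gamma_pos_of_pos ha
  unfold genGammaPDFReal
  positivity

lemma setIntegral_genGammaPDFReal (hp : p ≠ 0) (ha : 0 < a) (hb : 0 < b) :
    ∫ x in Set.Ioi 0, genGammaPDFReal p a b x = 1 := by
  have := Real.Gamma_pos_of_pos ha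
  calc ∫ x in Set.Ioi 0, genGammaPDFReal p a b x
    _ = ∫ x in Set.Ioi 0, (|p| * x ^ (p - 1)) •
          (b ^ a / Real.Gamma a * ((x ^ p) ^ (a - 1) * Real.exp (-(b * x ^ p)))) := by
      refine setIntegral_congr_fun measurableSet_Ioi fun x (hx : 0 < x) ↦ ?_
      rw [genGammaPDFReal, ← Real.rpow_mul hx.le, smul_eq_mul,
        show p * a - 1 = (p - 1) + p * (a - 1) by ring, Real.rpow_add hx]
      ring
    _ = ∫ y in Set.Ioi 0, b ^ a / Real.Gamma a * (y ^ (a - 1) * Real.exp (-(b * y))) :=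
      integral_comp_rpow_Ioi
        (fun y ↦ b ^ a / Real.Gamma a * (y ^ (a - 1) * Real.exp (-(b * y)))) hp
    _ = 1 := by
      rw [integral_const_mul, Real.integral_rpow_mul_exp_neg_mul_Ioi ha hb, one_div,
        Real.inv_rpow hb.le]
      field_simp

lemma integrableOn_genGammaPDFReal (hp : p ≠ 0) (ha : 0 < a) (hb : 0 < b) :
    IntegrableOn (genGammaPDFReal p a b) (Set.Ioi 0) :=
  .of_integral_ne_zero (by simp [setIntegral_genGammaPDFReal hp ha hb])

lemma setLIntegral_genGammaPDFReal (hp : p ≠ 0) (ha : 0 < a) (hb : 0 < b) :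
    ∫⁻ x in Set.Ioi 0, ENNReal.ofReal (genGammaPDFReal p a b x) = 1 := by
  rw [← ofReal_integral_eq_lintegral_ofReal (integrableOn_genGammaPDFReal hp ha hb)
    (ae_restrict_of_forall_mem measurableSet_Ioi fun _ ↦ genGammaPDFReal_nonneg ha hb),
    setIntegral_genGammaPDFReal hp ha hb, ENNReal.ofReal_one]

lemma isProbabilityMeasure_genGammaMeasure (hp : p ≠ 0) (ha : 0 < a) (hb : 0 < b) :
    IsProbabilityMeasure (genGammaMeasure p a b) :=
  ⟨by rw [genGammaMeasure, withDensity_apply _ .univ, Measure.restrict_univ,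
    setLIntegral_genGammaPDFReal hp ha hb]⟩

lemma ae_genGammaMeasure_pos : ∀ᵐ x ∂genGammaMeasure p a b, 0 < x :=
  (withDensity_absolutelyContinuous _ _).ae_le (ae_restrict_mem measurableSet_Ioi)

lemma ae_toReal_ofReal_genGammaPDFReal (ha : 0 < a) (hb : 0 < b) :
    ∀ᵐ x ∂volume.restrict (Set.Ioi 0),
      (ENNReal.ofReal (genGammaPDFReal p a b x)).toReal = genGammaPDFReal p a b x :=
  ae_restrict_of_forall_mem measurableSet_Ioi fun _ hx ↦
    ENNReal.toReal_ofReal (genGammaPDFReal_nonneg ha hb hx)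

lemma genGammaPDFReal_mul_exp_mul_log (hp : p ≠ 0) (hat : 0 < a + t / p) (hb : 0 < b)
    (hx : 0 < x) :
    genGammaPDFReal p a b x * Real.exp (t * Real.log x) =
      Real.Gamma (a + t / p) / (Real.Gamma a * b ^ (t / p)) *
        genGammaPDFReal p (a + t / p) b x := by
  have := Real.Gamma_pos_of_pos hat
  rw [genGammaPDFReal, genGammaPDFReal, mul_comm t, ← Real.rpow_def_of_pos hx, Real.rpow_add hb,
    show p * (a + t / p) - 1 = (p * a - 1) + t by field_simp; ring, Real.rpow_add hx]
  generalize Real.Gamma (a + t / p) = Γ at *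
  field_simp

lemma integrable_exp_mul_log_genGammaMeasure (hp : p ≠ 0) (ha : 0 < a) (hat : 0 < a + t / p)
    (hb : 0 < b) : Integrable (fun x ↦ Real.exp (t * Real.log x)) (genGammaMeasure p a b) := by
  rw [genGammaMeasure, integrable_withDensity_iff_integrable_smul₀' (by fun_prop) (by simp)]
  refine ((integrableOn_genGammaPDFReal hp hat hb).const_mul
    (Real.Gamma (a + t / p) / (Real.Gamma a * b ^ (t / p)))).congr ?_
  filter_upwards [ae_toReal_ofReal_genGammaPDFReal ha hb, ae_restrict_mem measurableSet_Ioi]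
    with x hpdf hx
  rw [hpdf, smul_eq_mul, genGammaPDFReal_mul_exp_mul_log hp hat hb hx]

lemma mgf_log_genGammaMeasure (hp : p ≠ 0) (ha : 0 < a) (hat : 0 < a + t / p) (hb : 0 < b) :
    mgf Real.log (genGammaMeasure p a b) t =
      Real.Gamma (a + t / p) / (Real.Gamma a * b ^ (t / p)) := by
  rw [mgf, genGammaMeasure, integral_withDensity_eq_integral_toReal_smul (by fun_prop) (by simp)]
  calc ∫ x in Set.Ioi 0, (ENNReal.ofReal (genGammaPDFReal p a b x)).toReal •
        Real.exp (t * Real.log x)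
    _ = ∫ x in Set.Ioi 0, Real.Gamma (a + t / p) / (Real.Gamma a * b ^ (t / p)) *
          genGammaPDFReal p (a + t / p) b x := by
      refine integral_congr_ae ?_
      filter_upwards [ae_toReal_ofReal_genGammaPDFReal ha hb, ae_restrict_mem measurableSet_Ioi]
        with x hpdf hx
      rw [hpdf, smul_eq_mul, genGammaPDFReal_mul_exp_mul_log hp hat hb hx]
    _ = _ := by rw [integral_const_mul, setIntegral_genGammaPDFReal hp hat hb, mul_one]

lemma eventually_pos_add_div (hat : 0 < a + t / p) : ∀ᶠ t in nhds t, 0 < a + t / p :=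
  ContinuousAt.eventually_lt (by fun_prop) (by fun_prop) hat

lemma zero_mem_interior_integrableExpSet_log (hp : p ≠ 0) (ha : 0 < a) (hb : 0 < b) :
    0 ∈ interior (integrableExpSet Real.log (genGammaMeasure p a b)) :=
  mem_interior_iff_mem_nhds.mpr <| (eventually_pos_add_div (by simpa using ha)).mono
    fun _ hat ↦ integrable_exp_mul_log_genGammaMeasure hp ha hat hb

lemma memLp_log_genGammaMeasure (hp : p ≠ 0) (ha : 0 < a) (hb : 0 < b) :
    MemLp Real.log 2 (genGammaMeasure p a b) :=
  memLp_of_mem_interior_integrableExpSet (zero_mem_interior_integrableExpSet_log hp ha hb) 2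

lemma hasDerivAt_log_comp_Gamma (ha : 0 < a) :
    HasDerivAt (fun x ↦ Real.log (Real.Gamma x)) (digamma a) a :=
  (Real.differentiableAt_Gamma fun m ↦ by linarith [m.cast_nonneg (α := ℝ)]).hasDerivAt.log
    (Real.Gamma_pos_of_pos ha).ne'

lemma cgf_log_genGammaMeasure (hp : p ≠ 0) (ha : 0 < a) (hat : 0 < a + t / p) (hb : 0 < b) :
    cgf Real.log (genGammaMeasure p a b) t =
      Real.log (Real.Gamma (a + t / p)) - Real.log (Real.Gamma a) - t / p * Real.log b := by
  have hΓ := (Real.Gamma_pos_of_pos ha).ne'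
  have hbt := (Real.rpow_pos_of_pos hb (t / p)).ne'
  rw [cgf, mgf_log_genGammaMeasure hp ha hat hb,
    Real.log_div (Real.Gamma_pos_of_pos hat).ne' (mul_ne_zero hΓ hbt), Real.log_mul hΓ hbt,
    Real.log_rpow hb, sub_sub]

lemma deriv_cgf_log_genGammaMeasure (hp : p ≠ 0) (ha : 0 < a) (hat : 0 < a + t / p) (hb : 0 < b) :
    deriv (cgf Real.log (genGammaMeasure p a b)) t = (digamma (a + t / p) - Real.log b) / p := by
  have scale : HasDerivAt (fun t ↦ t / p) (1 / p) t := (hasDerivAt_id t).div_const p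
  have cgf_eq : cgf Real.log (genGammaMeasure p a b) =ᶠ[nhds t] fun t ↦
      Real.log (Real.Gamma (a + t / p)) - Real.log (Real.Gamma a) - t / p * Real.log b :=
    (eventually_pos_add_div hat).mono fun _ hat ↦ cgf_log_genGammaMeasure hp ha hat hb
  rw [cgf_eq.deriv_eq, sub_div, div_eq_mul_one_div (digamma _), div_eq_inv_mul (Real.log b),
    ← one_div]
  exact (((hasDerivAt_log_comp_Gamma hat).comp t (scale.const_add a)).sub_const _ |>.sub
    (scale.mul_const _)).deriv

lemma variance_log_genGammaMeasure (hp : p ≠ 0) (ha : 0 < a) (hb : 0 < b) :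
    Var[Real.log; genGammaMeasure p a b] = trigamma a / p ^ 2 := by
  have := isProbabilityMeasure_genGammaMeasure hp ha hb
  have deriv_cgf_eq : deriv (cgf Real.log (genGammaMeasure p a b)) =ᶠ[nhds 0] fun t ↦
      (digamma (a + p⁻¹ * t) - Real.log b) / p :=
    (eventually_pos_add_div (t := 0) (by simpa using ha)).mono fun t hat ↦ by
      rw [deriv_cgf_log_genGammaMeasure hp ha hat hb, div_eq_inv_mul t]
  have second_deriv := variance_tilted_mul (zero_mem_interior_integrableExpSet_log hp ha hb)
  simp only [zero_mul, tilted_const] at second_deriv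
  rw [second_deriv, iteratedDeriv_succ, iteratedDeriv_one, deriv_cgf_eq.deriv_eq, deriv_div_const,
    deriv_sub_const, deriv_comp_mul_left p⁻¹ (fun y ↦ digamma (a + y)), deriv_comp_const_add,
    mul_zero, add_zero, smul_eq_mul, trigamma]
  field_simp

end GenGamma

lemma covariance_congr_ae {Ω : Type*} {mΩ : MeasurableSpace Ω} {P : Measure Ω}
    {X X' Y Y' : Ω → ℝ} (hX : X =ᵐ[P] X') (hY : Y =ᵐ[P] Y') : cov[X, Y; P] = cov[X', Y'; P] := by
  rw [covariance, covariance, integral_congr_ae hX, integral_congr_ae hY]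
  refine integral_congr_ae ?_
  filter_upwards [hX, hY] with ω hXω hYω
  rw [hXω, hYω]

section Independent

variable {ι : Type*} [Fintype ι] [DecidableEq ι] {Ω : ι → Type*} [∀ i, MeasurableSpace (Ω i)]
  {P : ∀ i, Measure (Ω i)} [∀ i, IsProbabilityMeasure (P i)] {Y : ∀ i, Ω i → ℝ}

lemma covariance_pi_eval_eval (hY : ∀ i, MemLp (Y i) 2 (P i)) (i j : ι) :
    cov[fun ω ↦ Y i (ω i), fun ω ↦ Y j (ω j); Measure.pi P] =
      if i = j then Var[Y i; P i] else 0 := by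
  have hY_eval (i : ι) : MemLp (fun ω ↦ Y i (ω i)) 2 (Measure.pi P) :=
    (hY i).comp_measurePreserving (measurePreserving_eval P i)
  split_ifs with h
  · subst h
    rw [covariance_self (hY_eval i).aemeasurable,
      (measurePreserving_eval P i).variance_fun_comp (hY i).aemeasurable]
  · exact ((iIndepFun_pi fun i ↦ (hY i).aemeasurable).indepFun h).covariance_eq_zero
      (hY_eval i) (hY_eval j)

lemma covariance_pi_sub_sub (hY : ∀ i, MemLp (Y i) 2 (P i)) (i j k l : ι) :
    cov[fun ω ↦ Y i (ω i) - Y k (ω k), fun ω ↦ Y j (ω j) - Y l (ω l); Measure.pi P] =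
      ((if i = j then 1 else 0) - if i = l then 1 else 0) * Var[Y i; P i] -
        ((if k = j then 1 else 0) - if k = l then 1 else 0) * Var[Y k; P k] := by
  have hY_eval (i : ι) : MemLp (fun ω ↦ Y i (ω i)) 2 (Measure.pi P) :=
    (hY i).comp_measurePreserving (measurePreserving_eval P i)
  rw [covariance_fun_sub_fun_sub (hY_eval i) (hY_eval k) (hY_eval j) (hY_eval l)]
  simp only [covariance_pi_eval_eval hY, sub_mul, ite_mul, one_mul, zero_mul]
  ring

end Independent

lemma measurable_log_div {ι : Type*} (i k : ι) :
    Measurable fun x : ι → ℝ ↦ Real.log (x i / x k) :=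
  Real.measurable_log.comp (by fun_prop)

section Normalization

variable {ι : Type*} [Fintype ι]

/-- The point of the simplex on the ray through `z`, called the closure of `z` in compositional
data analysis; it is only meaningful when `∑ i, z i ≠ 0`. -/
noncomputable def simplexNormalize (z : ι → ℝ) : ι → ℝ := (∑ i, z i)⁻¹ • z

@[fun_prop]
lemma measurable_simplexNormalize : Measurable (simplexNormalize (ι := ι)) := by
  unfold simplexNormalize
  fun_prop

lemma simplexNormalize_smul {s : ℝ} (hs : s ≠ 0) {x : ι → ℝ} (hx : ∑ i, x i = 1) :
    simplexNormalize (s • x) = x := by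
  simp [simplexNormalize, ← Finset.mul_sum, hx, smul_smul, hs]

lemma log_simplexNormalize_div {z : ι → ℝ} (hz : ∀ i, 0 < z i) (i k : ι) :
    Real.log (simplexNormalize z i / simplexNormalize z k) = Real.log (z i) - Real.log (z k) := by
  have hsum : (∑ j, z j)⁻¹ ≠ 0 :=
    inv_ne_zero (Finset.sum_pos (fun j _ ↦ hz j) ⟨i, Finset.mem_univ i⟩).ne'
  simp only [simplexNormalize, Pi.smul_apply, smul_eq_mul]
  rw [mul_div_mul_left _ _ hsum, Real.log_div (hz i).ne' (hz k).ne']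

lemma ae_log_simplexNormalize_div (p : ℝ) (a b : ι → ℝ) (i k : ι) :
    (fun z ↦ Real.log (simplexNormalize z i / simplexNormalize z k))
      =ᵐ[Measure.pi fun i ↦ genGammaMeasure p (a i) (b i)]
        fun z ↦ Real.log (z i) - Real.log (z k) := by
  have ae_pos : ∀ᵐ z ∂Measure.pi fun i ↦ genGammaMeasure p (a i) (b i), ∀ i, 0 < z i :=
    ae_all_iff.mpr fun i ↦ Measure.tendsto_eval_ae_ae.eventually ae_genGammaMeasure_pos
  filter_upwards [ae_pos] with z hz
  exact log_simplexNormalize_div hz i k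

end Normalization

section InverseSchlomilch

variable {K n : ℕ} {τ : ℝ}

/-- The inverse Schlömilch distribution `IS(α, β, τ)` as a measure carried by the simplex. -/
noncomputable def inverseSchlomilchMeasure (K : ℕ) (α β : Fin K → ℝ) (τ : ℝ) :
    Measure (Fin K → ℝ) :=
  (simplexMeasure K).withDensity fun x ↦ ENNReal.ofReal (isDensity K α β τ x)

@[fun_prop]
lemma measurable_isDensity (α β : Fin K → ℝ) (τ : ℝ) : Measurable (isDensity K α β τ) := by
  unfold isDensity
  fun_prop

lemma isDensity_nonneg {α β x : Fin K → ℝ} (hτ : 0 ≤ τ) (hα : 0 ≤ α) (hβ : 0 ≤ β) (hx : 0 ≤ x) :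
    0 ≤ isDensity K α β τ x := by
  refine mul_nonneg (mul_nonneg (mul_nonneg (by positivity) ?_) (Real.rpow_nonneg ?_ _)) ?_
  · exact Real.Gamma_nonneg_of_nonneg (Finset.sum_nonneg fun i _ ↦ hα i)
  · exact Finset.sum_nonneg fun j _ ↦ div_nonneg (hβ j) (Real.rpow_nonneg (hx j) τ)
  · exact Finset.prod_nonneg fun i _ ↦ div_nonneg (Real.rpow_nonneg (hβ i) _)
      (mul_nonneg (Real.Gamma_nonneg_of_nonneg (hα i)) (Real.rpow_nonneg (hx i) _))

lemma pow_mul_prod_genGammaPDFReal_smul {α β x : Fin (n + 1) → ℝ} {s : ℝ} (hτ : 0 < τ)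
    (hα : ∀ i, 0 < α i) (hβ : ∀ i, 0 < β i) (hs : 0 < s) (hx : ∀ i, 0 < x i) :
    s ^ n * ∏ i, genGammaPDFReal (-τ) (α i) (β i) ((s • x) i) =
      isDensity (n + 1) α β τ x *
        genGammaPDFReal (-τ) (∑ i, α i) (∑ j, β j / x j ^ τ) s := by
  have hΓ := (Real.Gamma_pos_of_pos (Finset.sum_pos (fun i _ ↦ hα i) Finset.univ_nonempty)).ne'
  have hB : 0 < ∑ j, β j / x j ^ τ := Finset.sum_pos
    (fun j _ ↦ div_pos (hβ j) (Real.rpow_pos_of_pos (hx j) τ)) Finset.univ_nonempty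
  have factor (i : Fin (n + 1)) : genGammaPDFReal (-τ) (α i) (β i) ((s • x) i) =
      τ * (β i ^ α i / (Real.Gamma (α i) * x i ^ (τ * α i + 1))) * s ^ (-τ * α i - 1) *
        Real.exp (-(β i / x i ^ τ * s ^ (-τ))) := by
    rw [genGammaPDFReal, Pi.smul_apply, smul_eq_mul, Real.mul_rpow hs.le (hx i).le,
      Real.mul_rpow hs.le (hx i).le, abs_neg, abs_of_pos hτ,
      show -τ * α i - 1 = -(τ * α i + 1) by ring, Real.rpow_neg (hx i).le, Real.rpow_neg (hx i).le]
    ring_nf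
  have radial_power : s ^ n * ∏ i, s ^ (-τ * α i - 1) = s ^ (-τ * ∑ i, α i - 1) := by
    rw [← Real.rpow_sum_of_pos hs, ← Real.rpow_natCast, ← Real.rpow_add hs]
    simp only [Finset.sum_sub_distrib, ← Finset.mul_sum, Finset.sum_const, Finset.card_univ,
      Fintype.card_fin, nsmul_eq_mul, mul_one, Nat.cast_add, Nat.cast_one]
    ring_nf
  have exponentials : ∏ i, Real.exp (-(β i / x i ^ τ * s ^ (-τ))) =
      Real.exp (-((∑ j, β j / x j ^ τ) * s ^ (-τ))) := by
    rw [← Real.exp_sum, Finset.sum_neg_distrib, ← Finset.sum_mul]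
  simp_rw [factor, Finset.prod_mul_distrib, exponentials]
  rw [isDensity, genGammaPDFReal, ← radial_power, abs_neg, abs_of_pos hτ, Real.rpow_neg hB.le]
  have := (Real.rpow_pos_of_pos hB (∑ i, α i)).ne'
  simp only [Finset.prod_const, Finset.card_univ, Fintype.card_fin, Nat.add_sub_cancel]
  field_simp
  ring

variable {α β : Fin (n + 1) → ℝ}

lemma lintegral_ray_eq_isDensity_mul (hτ : 0 < τ) (hα : ∀ i, 0 < α i) (hβ : ∀ i, 0 < β i)
    {x : Fin (n + 1) → ℝ} (hx : ∀ i, 0 < x i) (hx_sum : ∑ i, x i = 1)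
    (F : (Fin (n + 1) → ℝ) → ℝ≥0∞) :
    ∫⁻ s in Set.Ioi (0 : ℝ), ENNReal.ofReal (s ^ n) *
        ((∏ i, ENNReal.ofReal (genGammaPDFReal (-τ) (α i) (β i) ((s • x) i))) *
          F (simplexNormalize (s • x))) =
      ENNReal.ofReal (isDensity (n + 1) α β τ x) * F x := by
  have hA : 0 < ∑ i, α i := Finset.sum_pos (fun i _ ↦ hα i) Finset.univ_nonempty
  have hB : 0 < ∑ j, β j / x j ^ τ := Finset.sum_pos
    (fun j _ ↦ div_pos (hβ j) (Real.rpow_pos_of_pos (hx j) τ)) Finset.univ_nonempty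
  have integrand_eq {s : ℝ} (hs : 0 < s) : ENNReal.ofReal (s ^ n) *
        ((∏ i, ENNReal.ofReal (genGammaPDFReal (-τ) (α i) (β i) ((s • x) i))) *
          F (simplexNormalize (s • x))) =
      ENNReal.ofReal (isDensity (n + 1) α β τ x) * F x *
        ENNReal.ofReal (genGammaPDFReal (-τ) (∑ i, α i) (∑ j, β j / x j ^ τ) s) := by
    have pdf_nonneg (i : Fin (n + 1)) : 0 ≤ genGammaPDFReal (-τ) (α i) (β i) ((s • x) i) :=
      genGammaPDFReal_nonneg (hα i) (hβ i) (mul_pos hs (hx i))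
    rw [simplexNormalize_smul hs.ne' hx_sum, ← ENNReal.ofReal_prod_of_nonneg fun i _ ↦ pdf_nonneg i,
      ← mul_assoc, ← ENNReal.ofReal_mul (by positivity),
      pow_mul_prod_genGammaPDFReal_smul hτ hα hβ hs hx,
      ENNReal.ofReal_mul (isDensity_nonneg hτ.le (fun i ↦ (hα i).le) (fun i ↦ (hβ i).le)
        fun i ↦ (hx i).le)]
    ring
  rw [setLIntegral_congr_fun measurableSet_Ioi fun s hs ↦ integrand_eq hs,
    lintegral_const_mul _ (by fun_prop),
    setLIntegral_genGammaPDFReal (neg_ne_zero.mpr hτ.ne') hA hB, mul_one]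

theorem inverseSchlomilchMeasure_eq_map (hτ : 0 < τ) (hα : ∀ i, 0 < α i) (hβ : ∀ i, 0 < β i) :
    inverseSchlomilchMeasure (n + 1) α β τ =
      (Measure.pi fun i ↦ genGammaMeasure (-τ) (α i) (β i)).map simplexNormalize := by
  have pi_eq : Measure.pi (fun i ↦ genGammaMeasure (-τ) (α i) (β i)) =
      (volume.restrict (Set.univ.pi fun _ ↦ Set.Ioi 0)).withDensity
        fun z ↦ ∏ i, ENNReal.ofReal (genGammaPDFReal (-τ) (α i) (β i) (z i)) := by
    unfold genGammaMeasure
    rw [pi_withDensity (by fun_prop), volume_pi, Measure.restrict_pi_pi]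
  refine Measure.ext_of_lintegral _ fun F hF ↦ ?_
  rw [lintegral_map hF (by fun_prop), pi_eq,
    lintegral_withDensity_eq_lintegral_mul _ (by fun_prop) (by fun_prop),
    setLIntegral_pi_Ioi_eq_lintegral_simplexMeasure (by fun_prop), inverseSchlomilchMeasure,
    lintegral_withDensity_eq_lintegral_mul _ (by fun_prop) hF]
  refine lintegral_congr_ae ?_
  filter_upwards [ae_simplexMeasure_pos, ae_simplexMeasure_sum_eq_one] with x hx hx_sum
  exact (lintegral_ray_eq_isDensity_mul hτ hα hβ hx hx_sum F).symm

lemma isProbabilityMeasure_inverseSchlomilchMeasure (hτ : 0 < τ) (hα : ∀ i, 0 < α i)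
    (hβ : ∀ i, 0 < β i) : IsProbabilityMeasure (inverseSchlomilchMeasure (n + 1) α β τ) := by
  have (i : Fin (n + 1)) : IsProbabilityMeasure (genGammaMeasure (-τ) (α i) (β i)) :=
    isProbabilityMeasure_genGammaMeasure (neg_ne_zero.mpr hτ.ne') (hα i) (hβ i)
  rw [inverseSchlomilchMeasure_eq_map hτ hα hβ]
  exact Measure.isProbabilityMeasure_map (by fun_prop)

lemma integral_inverseSchlomilchMeasure (hτ : 0 ≤ τ) (hα : 0 ≤ α) (hβ : 0 ≤ β)
    (φ : (Fin (n + 1) → ℝ) → ℝ) :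
    ∫ x, φ x ∂inverseSchlomilchMeasure (n + 1) α β τ =
      ∫ x, φ x * isDensity (n + 1) α β τ x ∂simplexMeasure (n + 1) := by
  rw [inverseSchlomilchMeasure,
    integral_withDensity_eq_integral_toReal_smul (by fun_prop) (by simp)]
  refine integral_congr_ae ?_
  filter_upwards [ae_simplexMeasure_pos] with x hx
  rw [ENNReal.toReal_ofReal (isDensity_nonneg hτ hα hβ fun i ↦ (hx i).le), smul_eq_mul, mul_comm]

lemma memLp_log_div_inverseSchlomilchMeasure (hτ : 0 < τ) (hα : ∀ i, 0 < α i)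
    (hβ : ∀ i, 0 < β i) (i k : Fin (n + 1)) :
    MemLp (fun x ↦ Real.log (x i / x k)) 2 (inverseSchlomilchMeasure (n + 1) α β τ) := by
  have hp := neg_ne_zero.mpr hτ.ne'
  have (i : Fin (n + 1)) : IsProbabilityMeasure (genGammaMeasure (-τ) (α i) (β i)) :=
    isProbabilityMeasure_genGammaMeasure hp (hα i) (hβ i)
  have memLp_log_eval (i : Fin (n + 1)) : MemLp (fun z ↦ Real.log (z i)) 2
      (Measure.pi fun i ↦ genGammaMeasure (-τ) (α i) (β i)) :=
    (memLp_log_genGammaMeasure hp (hα i) (hβ i)).comp_measurePreserving (measurePreserving_eval _ i)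
  rw [inverseSchlomilchMeasure_eq_map hτ hα hβ,
    memLp_map_measure_iff (measurable_log_div i k).aestronglyMeasurable (by fun_prop)]
  exact (memLp_congr_ae (ae_log_simplexNormalize_div _ _ _ i k)).mpr
    ((memLp_log_eval i).sub (memLp_log_eval k))

theorem covariance_log_div_inverseSchlomilchMeasure (hτ : 0 < τ) (hα : ∀ i, 0 < α i)
    (hβ : ∀ i, 0 < β i) (i j k l : Fin (n + 1)) :
    cov[fun x ↦ Real.log (x i / x k), fun x ↦ Real.log (x j / x l);
        inverseSchlomilchMeasure (n + 1) α β τ] =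
      (1 / τ ^ 2) *
        ((kd i j - kd i l) * trigamma (α i) - (kd k j - kd k l) * trigamma (α k)) := by
  have hp := neg_ne_zero.mpr hτ.ne'
  have (i : Fin (n + 1)) : IsProbabilityMeasure (genGammaMeasure (-τ) (α i) (β i)) :=
    isProbabilityMeasure_genGammaMeasure hp (hα i) (hβ i)
  rw [inverseSchlomilchMeasure_eq_map hτ hα hβ,
    covariance_map_fun (measurable_log_div i k).aestronglyMeasurable
      (measurable_log_div j l).aestronglyMeasurable (by fun_prop),
    covariance_congr_ae (ae_log_simplexNormalize_div _ _ _ i k)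
      (ae_log_simplexNormalize_div _ _ _ j l),
    covariance_pi_sub_sub fun i ↦ memLp_log_genGammaMeasure hp (hα i) (hβ i)]
  simp only [variance_log_genGammaMeasure hp (hα _) (hβ _), neg_sq, kd]
  ring

end InverseSchlomilch

/-- Log-ratio covariances of the inverse Schlömilch distribution:
`Cov[log(X_i/X_k), log(X_j/X_l)] = (1/τ²)[(δ_ij − δ_il)ψ'(α_i) − (δ_kj − δ_kl)ψ'(α_k)]`. -/
theorem is_log_ratio_covariance
    (K : ℕ) (hK : 2 ≤ K) (τ : ℝ) (hτ : 0 < τ)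
    (α β : Fin K → ℝ) (hα : ∀ i, 0 < α i) (hβ : ∀ i, 0 < β i) (i j k l : Fin K) :
    (∫ x, Real.log (x i / x k) * Real.log (x j / x l) * isDensity K α β τ x
        ∂(simplexMeasure K))
      - (∫ x, Real.log (x i / x k) * isDensity K α β τ x ∂(simplexMeasure K)) *
        (∫ x, Real.log (x j / x l) * isDensity K α β τ x ∂(simplexMeasure K))
      = (1 / τ ^ 2) *
          ((kd i j - kd i l) * trigamma (α i) - (kd k j - kd k l) * trigamma (α k)) := by
  obtain ⟨n, rfl⟩ : ∃ n, K = n + 1 := Nat.exists_eq_add_one.mpr (by lia)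
  have := isProbabilityMeasure_inverseSchlomilchMeasure hτ hα hβ
  have expectation := integral_inverseSchlomilchMeasure hτ.le (fun i ↦ (hα i).le)
    (fun i ↦ (hβ i).le)
  rw [← covariance_log_div_inverseSchlomilchMeasure hτ hα hβ,
    covariance_eq_sub (memLp_log_div_inverseSchlomilchMeasure hτ hα hβ i k)
      (memLp_log_div_inverseSchlomilchMeasure hτ hα hβ j l)]
  simp only [Pi.mul_apply, expectation]
end

section
/- Let K ≥ 2, τ > 0, and β ∈ ℝ^K with all β_i > 0, and for α ∈ ℝ^K with all α_i > 0 let J(α) = ∫_{S_K} (∑_{j=1}^K β_j/x_j^τ)^{−α_+} ∏_{i=1}^K x_i^{−(τ α_i + 1)} d^{K−1}x where α_+ = ∑_{i=1}^K α_i. Then for all indices m, n, J(1 + e_m + e_n) = J_0 (1 + δ_{mn}) / (K(K+1) β_m β_n), where J_0 = J(1) = 1/((K−1)! τ^{K−1} ∏_{i=1}^K β_i), 1 + e_m + e_n denotes the vector with i-th component 1 + δ_{im} + δ_{in}, and δ is the Kronecker delta. -/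
open MeasureTheory Finset

/-- The unnormalized integral `J(α) = ∫_{S_K} (∑_j β_j/x_j^τ)^{-α_+} ∏_i x_i^{-(τα_i+1)}`. -/
noncomputable def Jint (K : ℕ) (β : Fin K → ℝ) (τ : ℝ) (α : Fin K → ℝ) : ℝ :=
  ∫ x, (∑ j, β j / x j ^ τ) ^ (-(∑ i, α i)) * ∏ i, x i ^ (-(τ * α i + 1))
    ∂(simplexMeasure K)

/-!
The integral of `∏ᵢ yᵢ ^ (-(τ αᵢ + 1)) exp (-βᵢ yᵢ ^ (-τ))` over the positive orthant is computed in
two ways. As a product of one-dimensional integrals it is `∏ᵢ Γ(αᵢ) / (τ βᵢ ^ αᵢ)`. In the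
coordinates `y = r x` with `x` in the simplex, homogeneity turns the radial integral into a single
Gamma integral and leaves `Γ(α₊) / τ * J(α)`. The resulting closed form of `J`, together with
`Γ(s + 1) = s Γ(s)`, gives `J(α + eₘ) = αₘ / (α₊ βₘ) * J(α)`, which is applied twice starting from
`J(1)`.
-/

theorem lintegral_eq_ofReal_pow_finrank_mul_lintegral_comp_smul {E : Type*} [NormedAddCommGroup E]
    [NormedSpace ℝ E] [FiniteDimensional ℝ E] [MeasurableSpace E] [BorelSpace E] (μ : Measure E)
    [μ.IsAddHaarMeasure] {r : ℝ} (hr : 0 < r) {F : E → ENNReal} (hF : Measurable F) :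
    ∫⁻ v, F v ∂μ = ENNReal.ofReal (r ^ Module.finrank ℝ E) * ∫⁻ u, F (r • u) ∂μ := by
  have scaled :
      ∫⁻ u, F (r • u) ∂μ = ENNReal.ofReal (r ^ Module.finrank ℝ E)⁻¹ * ∫⁻ v, F v ∂μ := by
    rw [← lintegral_map hF (measurable_const_smul r), Measure.map_addHaar_smul μ hr.ne',
      lintegral_smul_measure, abs_of_pos (by positivity), smul_eq_mul]
  rw [scaled, ← mul_assoc, ← ENNReal.ofReal_mul (by positivity),
    mul_inv_cancel₀ (by positivity), ENNReal.ofReal_one, one_mul]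

section ConeCoordinates

variable {n : ℕ}

/-- The point of `ℝ^(n+1)` with first coordinates `v` and coordinate sum `s`. For `s = 1` this
parametrizes the hyperplane containing the simplex; letting `s` vary gives linear coordinates
`(s, v)` of determinant `±1` on the whole space. -/
noncomputable def extendToSum (s : ℝ) (v : Fin n → ℝ) : Fin (n + 1) → ℝ :=
  Fin.snoc v (s - ∑ j, v j)

theorem extendToSum_castSucc (s : ℝ) (v : Fin n → ℝ) (j : Fin n) :
    extendToSum s v j.castSucc = v j :=
  Fin.snoc_castSucc ..

theorem extendToSum_last (s : ℝ) (v : Fin n → ℝ) :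
    extendToSum s v (Fin.last n) = s - ∑ j, v j :=
  Fin.snoc_last ..

theorem sum_extendToSum (s : ℝ) (v : Fin n → ℝ) : ∑ i, extendToSum s v i = s := by
  simp [Fin.sum_univ_castSucc, extendToSum_castSucc, extendToSum_last]

theorem smul_extendToSum (r s : ℝ) (v : Fin n → ℝ) :
    r • extendToSum s v = extendToSum (r * s) (r • v) := by
  funext i
  cases i using Fin.lastCases with
  | last => simp [extendToSum_last, mul_sub, mul_sum]
  | cast j => simp [extendToSum_castSucc]

theorem fillMap_eq_extendToSum (u : Fin n → ℝ) : fillMap (n + 1) u = extendToSum 1 u := by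
  funext i
  cases i using Fin.lastCases <;> simp [fillMap, extendToSum]

theorem measurable_extendToSum :
    Measurable fun p : ℝ × (Fin n → ℝ) => extendToSum p.1 p.2 :=
  (Continuous.finSnoc continuous_snd (by fun_prop)).measurable

theorem measurable_extendToSum_right (s : ℝ) : Measurable (extendToSum (n := n) s) :=
  measurable_extendToSum.comp measurable_prodMk_left

theorem measurePreserving_extendToSum :
    MeasurePreserving fun p : ℝ × (Fin n → ℝ) => extendToSum p.1 p.2 := by
  have shear : MeasurePreserving fun p : (Fin n → ℝ) × ℝ => (p.1, p.2 - ∑ j, p.1 j) :=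
    (MeasurePreserving.id volume).skew_product
      (g := fun (v : Fin n → ℝ) s => s - ∑ j, v j) (by fun_prop)
      (ae_of_all _ fun v => (measurePreserving_sub_right volume (∑ j, v j)).map_eq)
  have insertLast :=
    (volume_preserving_piFinSuccAbove (fun _ : Fin (n + 1) => ℝ) (Fin.last n)).symm
  convert insertLast.comp
    (Measure.measurePreserving_swap.comp (shear.comp Measure.measurePreserving_swap)) using 2 with p
  · simp [extendToSum, MeasurableEquiv.piFinSuccAbove, Fin.insertNthEquiv]
  · rfl

theorem setLIntegral_sum_pos_eq_lintegral_hyperplane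
    {G : (Fin (n + 1) → ℝ) → ENNReal} (hG : Measurable G) :
    ∫⁻ y in {y | 0 < ∑ i, y i}, G y =
      ∫⁻ x, (∫⁻ r in Set.Ioi 0, ENNReal.ofReal (r ^ n) * G (r • x))
        ∂(volume : Measure (Fin n → ℝ)).map (extendToSum 1) := by
  have preimage : (fun p : ℝ × (Fin n → ℝ) => extendToSum p.1 p.2) ⁻¹' {y | 0 < ∑ i, y i} =
      Set.Ioi 0 ×ˢ Set.univ := by
    ext p
    simp [sum_extendToSum]
  have measurable_slice (r : ℝ) : Measurable fun v : Fin n → ℝ => G (extendToSum r v) :=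
    hG.comp (measurable_extendToSum_right r)
  have measurable_radial : Measurable fun p : (Fin (n + 1) → ℝ) × ℝ =>
      ENNReal.ofReal (p.2 ^ n) * G (p.2 • p.1) := by fun_prop
  have hyperplane := measurable_extendToSum_right (n := n) 1
  calc ∫⁻ y in {y | 0 < ∑ i, y i}, G y
      = ∫⁻ p in Set.Ioi 0 ×ˢ Set.univ, G (extendToSum p.1 p.2)
          ∂(volume : Measure ℝ).prod (volume : Measure (Fin n → ℝ)) := by
        rw [← measurePreserving_extendToSum.setLIntegral_comp_preimage
          (measurableSet_lt measurable_const (by fun_prop)) hG, preimage]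
        rfl
    _ = ∫⁻ r in Set.Ioi 0, ∫⁻ v : Fin n → ℝ, G (extendToSum r v) := by
        rw [← Measure.prod_restrict, Measure.restrict_univ]
        exact lintegral_prod _ (hG.comp measurable_extendToSum).aemeasurable
    _ = ∫⁻ r in Set.Ioi 0, ∫⁻ u : Fin n → ℝ,
          ENNReal.ofReal (r ^ n) * G (r • extendToSum 1 u) := by
        refine setLIntegral_congr_fun measurableSet_Ioi fun r hr => ?_
        simp only [smul_extendToSum, mul_one]
        rw [lintegral_eq_ofReal_pow_finrank_mul_lintegral_comp_smul volume hr (measurable_slice r),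
          Module.finrank_fin_fun]
        exact (lintegral_const_mul _ ((measurable_slice r).comp (measurable_const_smul r))).symm
    _ = ∫⁻ u : Fin n → ℝ, ∫⁻ r in Set.Ioi 0,
          ENNReal.ofReal (r ^ n) * G (r • extendToSum 1 u) :=
        lintegral_lintegral_swap (measurable_radial.comp
          ((hyperplane.comp measurable_snd).prodMk measurable_fst)).aemeasurable
    _ = _ := (lintegral_map measurable_radial.lintegral_prod_right' hyperplane).symm

theorem simplexMeasure_succ_eq_restrict_Ici (n : ℕ) :
    simplexMeasure (n + 1) =
      ((volume : Measure (Fin n → ℝ)).map (extendToSum 1)).restrict (Set.Ici 0) := by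
  rw [Measure.restrict_map (measurable_extendToSum_right 1) measurableSet_Ici]
  have preimage : extendToSum 1 ⁻¹' Set.Ici 0 =
      {u : Fin n → ℝ | (∀ j, 0 ≤ u j) ∧ ∑ j, u j ≤ 1} := by
    ext u
    simp [Pi.le_def, Fin.forall_fin_succ', extendToSum_castSucc, extendToSum_last]
  rw [preimage, ← funext fillMap_eq_extendToSum]
  rfl

theorem ae_mem_stdSimplex (n : ℕ) :
    ∀ᵐ x ∂simplexMeasure (n + 1), x ∈ stdSimplex ℝ (Fin (n + 1)) := by
  rw [simplexMeasure_succ_eq_restrict_Ici]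
  have sum_eq_one : ∀ᵐ x ∂(volume : Measure (Fin n → ℝ)).map (extendToSum 1), ∑ i, x i = 1 := by
    rw [ae_map_iff (measurable_extendToSum_right 1).aemeasurable
      (measurableSet_eq_fun (by fun_prop) measurable_const)]
    exact ae_of_all _ (sum_extendToSum 1)
  filter_upwards [ae_restrict_mem measurableSet_Ici, ae_restrict_of_ae sum_eq_one]
    with x nonneg sum using ⟨nonneg, sum⟩

theorem setLIntegral_Ici_zero_eq_lintegral_simplexMeasure
    {G : (Fin (n + 1) → ℝ) → ENNReal} (hG : Measurable G) :
    ∫⁻ y in Set.Ici 0, G y =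
      ∫⁻ x, (∫⁻ r in Set.Ioi 0, ENNReal.ofReal (r ^ n) * G (r • x)) ∂simplexMeasure (n + 1) := by
  have ae_eq : (Set.Ici 0 : Set (Fin (n + 1) → ℝ)) =ᵐ[volume]
      (Set.Ici 0 ∩ {y | 0 < ∑ i, y i} : Set (Fin (n + 1) → ℝ)) := by
    filter_upwards [Measure.ae_ne volume (0 : Fin (n + 1) → ℝ)] with y hy
    refine propext ⟨fun nonneg => ⟨nonneg, ?_⟩, And.left⟩
    exact Fintype.sum_pos (lt_of_le_of_ne nonneg hy.symm)
  rw [setLIntegral_congr ae_eq, ← setLIntegral_indicator measurableSet_Ici,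
    setLIntegral_sum_pos_eq_lintegral_hyperplane (hG.indicator measurableSet_Ici),
    simplexMeasure_succ_eq_restrict_Ici, ← lintegral_indicator measurableSet_Ici]
  refine lintegral_congr fun x => ?_
  have smul_nonneg_iff : ∀ r ∈ Set.Ioi (0 : ℝ), 0 ≤ r • x ↔ 0 ≤ x := fun r hr =>
    smul_nonneg_iff_nonneg_of_pos_left hr
  by_cases hx : x ∈ Set.Ici 0
  · rw [Set.indicator_of_mem hx]
    refine setLIntegral_congr_fun measurableSet_Ioi fun r hr => ?_
    rw [Set.indicator_of_mem ((smul_nonneg_iff r hr).2 hx)]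
  · rw [Set.indicator_of_notMem hx, ← lintegral_zero]
    refine setLIntegral_congr_fun measurableSet_Ioi fun r hr => ?_
    rw [Set.indicator_of_notMem (mt (smul_nonneg_iff r hr).1 hx), mul_zero]

end ConeCoordinates

section InverseGammaKernel

/-- The unnormalized density at `t > 0` of `X ^ (-1 / τ)` for a Gamma variable `X` of shape `a` and
rate `b`; products of these kernels are the functions integrated over the orthant. -/
noncomputable def invGammaKernel (τ a b t : ℝ) : ℝ :=
  t ^ (-(τ * a + 1)) * Real.exp (-(b * t ^ (-τ)))

theorem measurable_invGammaKernel (τ a b : ℝ) : Measurable (invGammaKernel τ a b) := by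
  unfold invGammaKernel
  fun_prop

theorem invGammaKernel_nonneg (τ a b : ℝ) {t : ℝ} (ht : 0 ≤ t) : 0 ≤ invGammaKernel τ a b t :=
  mul_nonneg (Real.rpow_nonneg ht _) (Real.exp_nonneg _)

theorem integral_Ioi_invGammaKernel {τ a b : ℝ} (hτ : 0 < τ) (ha : 0 < a) (hb : 0 < b) :
    ∫ t in Set.Ioi 0, invGammaKernel τ a b t = Real.Gamma a / (τ * b ^ a) := by
  have substitution := integral_comp_rpow_Ioi
    (fun t : ℝ => t ^ (a - 1) * Real.exp (-(b * t))) (neg_ne_zero.2 hτ.ne')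
  rw [Real.integral_rpow_mul_exp_neg_mul_Ioi ha hb] at substitution
  calc ∫ t in Set.Ioi 0, invGammaKernel τ a b t
      = ∫ t in Set.Ioi 0, τ⁻¹ * ((|-τ| * t ^ (-τ - 1)) •
          ((t ^ (-τ)) ^ (a - 1) * Real.exp (-(b * t ^ (-τ))))) := by
        refine setIntegral_congr_fun measurableSet_Ioi fun t (ht : 0 < t) => ?_
        have exponents : t ^ (-(τ * a + 1)) = t ^ (-τ - 1) * (t ^ (-τ)) ^ (a - 1) := by
          rw [← Real.rpow_mul ht.le, ← Real.rpow_add ht]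
          ring_nf
        simp only [invGammaKernel, exponents, abs_neg, abs_of_pos hτ, smul_eq_mul]
        field_simp
    _ = τ⁻¹ * ((1 / b) ^ a * Real.Gamma a) := by rw [integral_const_mul, substitution]
    _ = Real.Gamma a / (τ * b ^ a) := by
        rw [Real.div_rpow zero_le_one hb.le, Real.one_rpow]
        field_simp

theorem integrableOn_Ioi_invGammaKernel {τ a b : ℝ} (hτ : 0 < τ) (ha : 0 < a) (hb : 0 < b) :
    IntegrableOn (invGammaKernel τ a b) (Set.Ioi 0) := by
  have := Real.Gamma_pos_of_pos ha
  refine Integrable.of_integral_ne_zero ?_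
  rw [integral_Ioi_invGammaKernel hτ ha hb]
  positivity

theorem lintegral_Ioi_invGammaKernel {τ a b : ℝ} (hτ : 0 < τ) (ha : 0 < a) (hb : 0 < b) :
    ∫⁻ t in Set.Ioi 0, ENNReal.ofReal (invGammaKernel τ a b t) =
      ENNReal.ofReal (Real.Gamma a / (τ * b ^ a)) := by
  rw [← integral_Ioi_invGammaKernel hτ ha hb]
  refine (ofReal_integral_eq_lintegral_ofReal (integrableOn_Ioi_invGammaKernel hτ ha hb) ?_).symm
  filter_upwards [ae_restrict_mem measurableSet_Ioi] with t ht
    using invGammaKernel_nonneg τ a b (le_of_lt ht)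

theorem invGammaKernel_mul (τ a b : ℝ) {r x : ℝ} (hr : 0 ≤ r) (hx : 0 ≤ x) :
    invGammaKernel τ a b (r * x) = x ^ (-(τ * a + 1)) * invGammaKernel τ a (b / x ^ τ) r := by
  simp only [invGammaKernel, Real.mul_rpow hr hx, Real.rpow_neg hx τ]
  ring_nf

theorem pow_mul_prod_invGammaKernel {n : ℕ} (τ : ℝ) (a b : Fin (n + 1) → ℝ) {r : ℝ} (hr : 0 < r) :
    r ^ n * ∏ i, invGammaKernel τ (a i) (b i) r = invGammaKernel τ (∑ i, a i) (∑ i, b i) r := by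
  have exponents : r ^ n * r ^ ∑ i, -(τ * a i + 1) = r ^ (-(τ * ∑ i, a i + 1)) := by
    rw [← Real.rpow_natCast, ← Real.rpow_add hr]
    congr 1
    simp only [neg_add_rev, sum_add_distrib, sum_neg_distrib, sum_const, card_univ,
      Fintype.card_fin, nsmul_eq_mul, Nat.cast_add, Nat.cast_one, mul_one, ← mul_sum]
    ring
  simp only [invGammaKernel]
  rw [prod_mul_distrib, ← Real.exp_sum, ← Real.rpow_sum_of_pos hr, ← mul_assoc, exponents,
    sum_neg_distrib, sum_mul]

theorem volume_restrict_Ici_zero_eq_pi {ι : Type*} [Fintype ι] :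
    (volume : Measure (ι → ℝ)).restrict (Set.Ici 0) =
      Measure.pi fun _ => volume.restrict (Set.Ioi 0) := by
  rw [← Set.pi_univ_Ici, volume_pi, Measure.restrict_pi_pi]
  simp only [Pi.zero_apply, restrict_Ioi_eq_restrict_Ici]

theorem setLIntegral_Ici_zero_prod_invGammaKernel {ι : Type*} [Fintype ι] {τ : ℝ} {a b : ι → ℝ}
    (hτ : 0 < τ) (ha : ∀ i, 0 < a i) (hb : ∀ i, 0 < b i) :
    ∫⁻ y in Set.Ici (0 : ι → ℝ), ENNReal.ofReal (∏ i, invGammaKernel τ (a i) (b i) (y i)) =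
      ENNReal.ofReal (∏ i, Real.Gamma (a i) / (τ * b i ^ a i)) := by
  have integrable : Integrable (fun y : ι → ℝ => ∏ i, invGammaKernel τ (a i) (b i) (y i))
      (volume.restrict (Set.Ici 0)) := by
    rw [volume_restrict_Ici_zero_eq_pi]
    exact .fintype_prod fun i => integrableOn_Ioi_invGammaKernel hτ (ha i) (hb i)
  rw [← ofReal_integral_eq_lintegral_ofReal integrable, volume_restrict_Ici_zero_eq_pi,
    integral_fintype_prod_eq_prod fun i => invGammaKernel τ (a i) (b i)]
  · simp only [integral_Ioi_invGammaKernel hτ (ha _) (hb _)]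
  · filter_upwards [ae_restrict_mem measurableSet_Ici] with y hy
      using prod_nonneg fun i _ => invGammaKernel_nonneg _ _ _ (hy i)

end InverseGammaKernel

section SimplexIntegrand

variable {ι : Type*} [Fintype ι] {β α x : ι → ℝ} {τ : ℝ}

/-- The integrand of `Jint`, defined for all real vectors `x` and with an arbitrary finite index
type. -/
noncomputable def simplexIntegrand (β : ι → ℝ) (τ : ℝ) (α x : ι → ℝ) : ℝ :=
  (∑ j, β j / x j ^ τ) ^ (-(∑ i, α i)) * ∏ i, x i ^ (-(τ * α i + 1))

theorem measurable_simplexIntegrand : Measurable (simplexIntegrand β τ α) := by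
  unfold simplexIntegrand
  fun_prop

theorem simplexIntegrand_nonneg (hβ : ∀ i, 0 ≤ β i) (hx : ∀ i, 0 ≤ x i) :
    0 ≤ simplexIntegrand β τ α x :=
  mul_nonneg
    (Real.rpow_nonneg
      (sum_nonneg fun i _ => div_nonneg (hβ i) (Real.rpow_nonneg (hx i) τ)) _)
    (prod_nonneg fun i _ => Real.rpow_nonneg (hx i) _)

theorem sum_div_rpow_pos_of_mem_stdSimplex (hβ : ∀ i, 0 < β i)
    (hx : x ∈ stdSimplex ℝ ι) : 0 < ∑ j, β j / x j ^ τ := by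
  obtain ⟨i, -, hi⟩ := exists_ne_zero_of_sum_ne_zero (hx.2.trans_ne one_ne_zero)
  exact sum_pos' (fun j _ => div_nonneg (hβ j).le (Real.rpow_nonneg (hx.1 j) τ))
    ⟨i, mem_univ i, div_pos (hβ i) (Real.rpow_pos_of_pos ((hx.1 i).lt_of_ne' hi) τ)⟩

end SimplexIntegrand

section ClosedForm

variable {n : ℕ} {β α : Fin (n + 1) → ℝ} {τ : ℝ}

-- On the faces `x j = 0` both sides are evaluated with `β j / 0 = 0`, so no face is excluded.
theorem lintegral_ray_prod_invGammaKernel (hτ : 0 < τ) (hα : 0 < ∑ i, α i) (hβ : ∀ i, 0 < β i)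
    {x : Fin (n + 1) → ℝ} (hx : x ∈ stdSimplex ℝ (Fin (n + 1))) :
    ∫⁻ r in Set.Ioi 0, ENNReal.ofReal (r ^ n) *
        ENNReal.ofReal (∏ i, invGammaKernel τ (α i) (β i) ((r • x) i)) =
      ENNReal.ofReal (Real.Gamma (∑ i, α i) / τ) * ENNReal.ofReal (simplexIntegrand β τ α x) := by
  have rate_pos := sum_div_rpow_pos_of_mem_stdSimplex (τ := τ) hβ hx
  have weight_nonneg : 0 ≤ ∏ i, x i ^ (-(τ * α i + 1)) :=
    prod_nonneg fun i _ => Real.rpow_nonneg (hx.1 i) _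
  have := Real.Gamma_pos_of_pos hα
  calc _ = ∫⁻ r in Set.Ioi 0, ENNReal.ofReal (∏ i, x i ^ (-(τ * α i + 1))) *
          ENNReal.ofReal (invGammaKernel τ (∑ i, α i) (∑ j, β j / x j ^ τ) r) := by
        refine setLIntegral_congr_fun measurableSet_Ioi fun r (hr : 0 < r) => ?_
        simp only [Pi.smul_apply, smul_eq_mul, invGammaKernel_mul _ _ _ hr.le (hx.1 _)]
        rw [← ENNReal.ofReal_mul (by positivity), ← ENNReal.ofReal_mul weight_nonneg,
          prod_mul_distrib, ← pow_mul_prod_invGammaKernel _ _ _ hr, mul_left_comm]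
    _ = ENNReal.ofReal ((∏ i, x i ^ (-(τ * α i + 1))) *
          (Real.Gamma (∑ i, α i) / (τ * (∑ j, β j / x j ^ τ) ^ ∑ i, α i))) := by
        rw [lintegral_const_mul _ (measurable_invGammaKernel ..).ennreal_ofReal,
          lintegral_Ioi_invGammaKernel hτ hα rate_pos, ← ENNReal.ofReal_mul weight_nonneg]
    _ = _ := by
        rw [← ENNReal.ofReal_mul (by positivity), simplexIntegrand, Real.rpow_neg rate_pos.le]
        congr 1
        field_simp

theorem Jint_eq_toReal_lintegral (hβ : ∀ i, 0 ≤ β i) :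
    Jint (n + 1) β τ α =
      (∫⁻ x, ENNReal.ofReal (simplexIntegrand β τ α x) ∂simplexMeasure (n + 1)).toReal := by
  refine integral_eq_lintegral_of_nonneg_ae ?_ measurable_simplexIntegrand.aestronglyMeasurable
  filter_upwards [ae_mem_stdSimplex n] with x hx using simplexIntegrand_nonneg hβ hx.1

theorem Gamma_sum_div_mul_Jint (hτ : 0 < τ) (hα : ∀ i, 0 < α i) (hβ : ∀ i, 0 < β i) :
    Real.Gamma (∑ i, α i) / τ * Jint (n + 1) β τ α =
      ∏ i, Real.Gamma (α i) / (τ * β i ^ α i) := by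
  have total_pos : 0 < ∑ i, α i := sum_pos (fun i _ => hα i) univ_nonempty
  have := Real.Gamma_pos_of_pos total_pos
  have gammas_nonneg : 0 ≤ ∏ i, Real.Gamma (α i) / (τ * β i ^ α i) := prod_nonneg fun i _ =>
    have := Real.Gamma_pos_of_pos (hα i)
    have := hβ i
    by positivity
  have measurable_kernel : Measurable fun y : Fin (n + 1) → ℝ =>
      ENNReal.ofReal (∏ i, invGammaKernel τ (α i) (β i) (y i)) :=
    (Finset.measurable_prod _ fun i _ =>
      (measurable_invGammaKernel ..).comp (measurable_pi_apply i)).ennreal_ofReal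
  rw [Jint_eq_toReal_lintegral fun i => (hβ i).le]
  calc _ = (ENNReal.ofReal (Real.Gamma (∑ i, α i) / τ) *
          ∫⁻ x, ENNReal.ofReal (simplexIntegrand β τ α x) ∂simplexMeasure (n + 1)).toReal := by
        rw [ENNReal.toReal_mul, ENNReal.toReal_ofReal (by positivity)]
    _ = (∫⁻ y in Set.Ici (0 : Fin (n + 1) → ℝ),
          ENNReal.ofReal (∏ i, invGammaKernel τ (α i) (β i) (y i))).toReal := by
        rw [setLIntegral_Ici_zero_eq_lintegral_simplexMeasure measurable_kernel,
          ← lintegral_const_mul _ measurable_simplexIntegrand.ennreal_ofReal]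
        congr 1
        refine (lintegral_congr_ae ?_).symm
        filter_upwards [ae_mem_stdSimplex n] with x hx
          using lintegral_ray_prod_invGammaKernel hτ total_pos hβ hx
    _ = ∏ i, Real.Gamma (α i) / (τ * β i ^ α i) := by
        rw [setLIntegral_Ici_zero_prod_invGammaKernel hτ hα hβ, ENNReal.toReal_ofReal gammas_nonneg]

theorem Jint_eq (hτ : 0 < τ) (hα : ∀ i, 0 < α i) (hβ : ∀ i, 0 < β i) :
    Jint (n + 1) β τ α =
      (∏ i, Real.Gamma (α i) / β i ^ α i) / (τ ^ n * Real.Gamma (∑ i, α i)) := by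
  have := Real.Gamma_pos_of_pos (sum_pos (fun i _ => hα i) univ_nonempty)
  have key := Gamma_sum_div_mul_Jint hτ hα hβ
  simp only [div_mul_eq_div_div_swap] at key
  rw [prod_div_distrib, prod_const, card_univ, Fintype.card_fin, pow_succ'] at key
  field_simp at key ⊢
  linear_combination key

theorem Jint_one (hτ : 0 < τ) (hβ : ∀ i, 0 < β i) :
    Jint (n + 1) β τ 1 = 1 / (Nat.factorial n * τ ^ n * ∏ i, β i) := by
  rw [Jint_eq hτ (α := 1) (fun _ => one_pos) hβ]
  simp only [Pi.one_apply, Real.Gamma_one, Real.rpow_one, one_div, prod_inv_distrib, sum_const,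
    card_univ, Fintype.card_fin, nsmul_eq_mul, Nat.cast_add, Nat.cast_one, mul_one,
    Real.Gamma_nat_eq_factorial, mul_inv_rev]
  ring

theorem add_single_one_pos {ι : Type*} [DecidableEq ι] {α : ι → ℝ} (hα : ∀ i, 0 < α i) (m i : ι) :
    0 < (α + Pi.single m 1 : ι → ℝ) i :=
  add_pos_of_pos_of_nonneg (hα i) ((Pi.single_nonneg (α := fun _ => ℝ)).2 zero_le_one i)

theorem Jint_add_single (hτ : 0 < τ) (hα : ∀ i, 0 < α i) (hβ : ∀ i, 0 < β i) (m : Fin (n + 1)) :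
    Jint (n + 1) β τ (α + Pi.single m 1) =
      α m / ((∑ i, α i) * β m) * Jint (n + 1) β τ α := by
  have total_pos : 0 < ∑ i, α i := sum_pos (fun i _ => hα i) univ_nonempty
  set shifted : Fin (n + 1) → ℝ := α + Pi.single m 1 with shifted_def
  have sum_shifted : ∑ i, shifted i = ∑ i, α i + 1 := by
    simp [shifted_def, sum_add_distrib]
  have factor (i : Fin (n + 1)) : Real.Gamma (shifted i) / β i ^ shifted i =
      (if i = m then α m / β m else 1) * (Real.Gamma (α i) / β i ^ α i) := by
    obtain rfl | him := eq_or_ne i m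
    · simp only [shifted_def, Pi.add_apply, Pi.single_eq_same, if_true,
        Real.Gamma_add_one (hα i).ne', Real.rpow_add_one (hβ i).ne']
      field_simp
    · simp [shifted_def, him]
  rw [Jint_eq hτ (add_single_one_pos hα m) hβ, Jint_eq hτ hα hβ, sum_shifted,
    Real.Gamma_add_one total_pos.ne', prod_congr rfl fun i _ => factor i, prod_mul_distrib,
    prod_ite_eq' univ m]
  simp only [mem_univ, if_true]
  field_simp

end ClosedForm

/-- `J(1 + e_m + e_n) = J_0 (1 + δ_mn)/(K(K+1) β_m β_n)` where
`J_0 = J(1) = 1/((K−1)! τ^{K−1} ∏_i β_i)`. -/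
theorem J_at_one_plus_two_units
    (K : ℕ) (hK : 2 ≤ K) (τ : ℝ) (hτ : 0 < τ)
    (β : Fin K → ℝ) (hβ : ∀ i, 0 < β i) (m n : Fin K) :
    Jint K β τ (fun i => 1 + kd i m + kd i n)
      = (1 / ((Nat.factorial (K - 1) : ℝ) * τ ^ (K - 1) * ∏ i, β i)) *
          (1 + kd m n) / ((K : ℝ) * ((K : ℝ) + 1) * β m * β n) := by
  obtain ⟨k, rfl⟩ : ∃ k, K = k + 1 := ⟨K - 1, by omega⟩
  have ones_pos (i : Fin (k + 1)) : 0 < (1 : Fin (k + 1) → ℝ) i := zero_lt_one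
  have exponent : (fun i => 1 + kd i m + kd i n) = 1 + Pi.single m 1 + Pi.single n (1 : ℝ) := by
    funext i
    simp [kd, Pi.single_apply]
  have exponent_at : (1 + Pi.single m 1 : Fin (k + 1) → ℝ) n = 1 + kd m n := by
    simp [kd, Pi.single_apply, eq_comm]
  have exponent_sum : ∑ i, (1 + Pi.single m 1 : Fin (k + 1) → ℝ) i = (k + 1 : ℕ) + 1 := by
    simp [sum_add_distrib]
  rw [exponent, Jint_add_single hτ (add_single_one_pos ones_pos m) hβ,
    Jint_add_single hτ ones_pos hβ, Jint_one hτ hβ, exponent_at, exponent_sum]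
  have := (hβ m).ne'
  have := (hβ n).ne'
  simp only [Nat.cast_add, Nat.cast_one, Pi.one_apply, sum_const, card_univ, Fintype.card_fin,
    nsmul_eq_mul, mul_one, one_div, mul_inv_rev, add_tsub_cancel_right]
  field_simp
end
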